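/- arXiv:2508.07066 — 2 statements merged into one kernel-verified Lean document; each statement's English description precedes it below -/
import Mathlib

section
/- Let n ≥ 1 and let S = (S_1, …, S_{n+1}) be an exchangeable random vector with values in ℝ^{n+1}. Then for every integer k with 0 ≤ k ≤ n+1, ℙ( |{i ∈ {1,…,n+1} : S_i ≤ S_{n+1}}| ≤ k ) ≤ k/(n+1). -/
open MeasureTheory ProbabilityTheory

/-- At most `k` coordinates have rank at most `k`. -/
lemma card_rank_le_aux {m : ℕ} (x : Fin m → ℝ) (k : ℕ) :
    (Finset.univ.filter (fun j : Fin m =>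
      (Finset.univ.filter (fun i : Fin m => x i ≤ x j)).card ≤ k)).card ≤ k := by
  set J := Finset.univ.filter (fun j : Fin m =>
      (Finset.univ.filter (fun i : Fin m => x i ≤ x j)).card ≤ k) with hJ
  rcases J.eq_empty_or_nonempty with h | h
  · simp [h]
  · obtain ⟨j, hj, hmax⟩ := J.exists_max_image x h
    refine le_trans (Finset.card_le_card ?_) (Finset.mem_filter.1 hj).2
    intro i hi
    exact Finset.mem_filter.2 ⟨Finset.mem_univ _, hmax i hi⟩

/-- The event that coordinate `j` has rank at most `k` is measurable. -/
lemma measurableSet_rank_aux {m : ℕ} (j : Fin m) (k : ℕ) :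
    MeasurableSet {x : Fin m → ℝ |
      (Finset.univ.filter (fun i : Fin m => x i ≤ x j)).card ≤ k} := by
  have : Measurable (fun x : Fin m → ℝ =>
      (Finset.univ.filter (fun i : Fin m => x i ≤ x j)).card) := by
    simp only [Finset.card_filter]
    refine Finset.measurable_sum _ fun i _ => ?_
    exact Measurable.ite (measurableSet_le (measurable_pi_apply i) (measurable_pi_apply j))
      measurable_const measurable_const
  exact this measurableSet_Iic

/-- Sub-uniformity of the rank of the last coordinate of an exchangeable random vector:
if `S = (S_1, …, S_{n+1})` is exchangeable in `ℝ^{n+1}`, then for every `0 ≤ k ≤ n+1`,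
`P(|{i : S_i ≤ S_{n+1}}| ≤ k) ≤ k/(n+1)`. -/
theorem rank_subuniform_of_exchangeable
    {Ω : Type*} [MeasurableSpace Ω] (P : Measure Ω) [IsProbabilityMeasure P]
    (n : ℕ) (hn : 1 ≤ n) (S : Ω → Fin (n + 1) → ℝ) (hS : Measurable S)
    (hexch : ∀ σ : Equiv.Perm (Fin (n + 1)),
      Measure.map (fun ω i => S ω (σ i)) P = Measure.map S P)
    (k : ℕ) (hk : k ≤ n + 1) :
    P {ω | (Finset.univ.filter (fun i : Fin (n + 1) => S ω i ≤ S ω (Fin.last n))).card ≤ k}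
      ≤ (k : ENNReal) / (n + 1) := by
  set A : Fin (n + 1) → Set (Fin (n + 1) → ℝ) := fun j => {x |
      (Finset.univ.filter (fun i : Fin (n + 1) => x i ≤ x j)).card ≤ k} with hA
  have hAm : ∀ j, MeasurableSet (A j) := fun j => measurableSet_rank_aux j k
  set μ := Measure.map S P with hμ
  have : IsProbabilityMeasure μ := Measure.isProbabilityMeasure_map hS.aemeasurable
  have hlast : P {ω | (Finset.univ.filter
      (fun i : Fin (n + 1) => S ω i ≤ S ω (Fin.last n))).card ≤ k} = μ (A (Fin.last n)) := by
    rw [hμ, Measure.map_apply hS (hAm _)]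
    rfl
  have heq : ∀ j, μ (A j) = μ (A (Fin.last n)) := by
    intro j
    have hmeas : Measurable (fun ω i => S ω (Equiv.swap j (Fin.last n) i)) :=
      measurable_pi_lambda _ fun i => (measurable_pi_apply _).comp hS
    conv_lhs => rw [← hexch (Equiv.swap j (Fin.last n)), Measure.map_apply hmeas (hAm _)]
    rw [hμ, Measure.map_apply hS (hAm _)]
    congr 1
    ext ω
    simp only [hA, Set.mem_preimage, Set.mem_setOf_eq, Equiv.swap_apply_left]
    have : (Finset.univ.filter (fun i : Fin (n + 1) =>
        S ω (Equiv.swap j (Fin.last n) i) ≤ S ω (Fin.last n))).card =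
        (Finset.univ.filter (fun i : Fin (n + 1) => S ω i ≤ S ω (Fin.last n))).card := by
      simp only [Finset.card_filter]
      exact Equiv.sum_comp (Equiv.swap j (Fin.last n))
        (fun i => if S ω i ≤ S ω (Fin.last n) then 1 else 0)
    rw [this]
  have hsum : ∑ j, μ (A j) ≤ k := by
    calc ∑ j, μ (A j) = ∑ j, ∫⁻ x, (A j).indicator 1 x ∂μ := by
          simp only [lintegral_indicator_one (hAm _)]
      _ = ∫⁻ x, ∑ j, (A j).indicator 1 x ∂μ :=
          (lintegral_finsetSum _ fun j _ => measurable_one.indicator (hAm j)).symm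
      _ ≤ ∫⁻ _, (k : ENNReal) ∂μ := by
          refine lintegral_mono fun x => ?_
          have h := card_rank_le_aux x k
          rw [Finset.card_filter] at h
          have h' : ((∑ j : Fin (n + 1), if (Finset.univ.filter
            (fun i : Fin (n + 1) => x i ≤ x j)).card ≤ k then 1 else 0 : ℕ) : ENNReal) ≤ k := by
            exact_mod_cast h
          refine le_trans (le_of_eq ?_) h'
          push_cast
          refine Finset.sum_congr rfl fun j _ => ?_
          simp [hA, Set.indicator_apply]
      _ = k := by simp
  rw [hlast, ENNReal.le_div_iff_mul_le (by simp) (by simp)]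
  simp only [heq, Finset.sum_const, Finset.card_univ, Fintype.card_fin, nsmul_eq_mul] at hsum
  rw [mul_comm]
  exact_mod_cast hsum
end

section
/- Let T ≥ 1, let p = (p_1, …, p_T) ∈ [0,1]^T, let α ∈ (0,1), and let R(p) denote the Benjamini–Hochberg rejection set at level α applied to p. Fix t ∈ {1,…,T} and let p' be the vector obtained from p by replacing p_t with 0. If t ∈ R(p), then |R(p')| = |R(p)|. -/
/-- The number `k*` of Benjamini–Hochberg rejections at level `α`: the largest (1-based) rank `m`
such that the `m`-th order statistic `p^(m)` of the p-values satisfies `p^(m) ≤ α·m/T`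
(and `0` if no such rank exists). Here `p (Tuple.sort p m)` is the order statistic of rank
`m.val + 1`. -/
noncomputable def bhNumReject {T : ℕ} (p : Fin T → ℝ) (α : ℝ) : ℕ :=
  if h : (Finset.univ.filter
      (fun m : Fin T => p (Tuple.sort p m) ≤ α * (m.val + 1) / T)).Nonempty then
    ((Finset.univ.filter
      (fun m : Fin T => p (Tuple.sort p m) ≤ α * (m.val + 1) / T)).max' h).val + 1
  else 0

/-- The Benjamini–Hochberg rejection set at level `α`: `R = {t : p_t ≤ α·k*/T}`, with `R = ∅`
when `k* = 0`. -/
noncomputable def bhReject {T : ℕ} (p : Fin T → ℝ) (α : ℝ) : Finset (Fin T) :=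
  if bhNumReject p α = 0 then ∅
  else Finset.univ.filter (fun t => p t ≤ α * (bhNumReject p α) / T)

theorem bh_order_stat_le_iff {T : ℕ} (p : Fin T → ℝ) (c : ℝ) (m : Fin T) :
    p (Tuple.sort p m) ≤ c ↔ m.val + 1 ≤ (Finset.univ.filter (fun i => p i ≤ c)).card := by
  have h := Tuple.lt_card_le_iff_apply_le_of_monotone (f := p ∘ Tuple.sort p) (a := c) (j := m)
    (Tuple.monotone_sort p)
  have hc : (Finset.univ.filter (fun i => (p ∘ Tuple.sort p) i ≤ c)).card
      = (Finset.univ.filter (fun i => p i ≤ c)).card := by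
    rw [← Fintype.card_subtype, ← Fintype.card_subtype]
    exact Fintype.card_congr ((Tuple.sort p).subtypeEquiv (fun _ => Iff.rfl))
  rw [hc] at h
  exact h.symm

theorem bhNumReject_le_card {T : ℕ} (p : Fin T → ℝ) (α : ℝ) :
    bhNumReject p α ≤
      (Finset.univ.filter (fun i => p i ≤ α * (bhNumReject p α : ℕ) / T)).card := by
  by_cases h : (Finset.univ.filter
      (fun m : Fin T => p (Tuple.sort p m) ≤ α * (m.val + 1) / T)).Nonempty
  · have hm := Finset.max'_mem _ h
    have hk : bhNumReject p α = ((Finset.univ.filter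
      (fun m : Fin T => p (Tuple.sort p m) ≤ α * (m.val + 1) / T)).max' h).val + 1 := by
      unfold bhNumReject
      rw [dif_pos h]
    rw [Finset.mem_filter, bh_order_stat_le_iff] at hm
    rw [hk]
    push_cast
    exact hm.2
  · have hk : bhNumReject p α = 0 := by
      unfold bhNumReject
      rw [dif_neg h]
    rw [hk]
    exact Nat.zero_le _

theorem le_bhNumReject {T : ℕ} (p : Fin T → ℝ) (α : ℝ) (m : ℕ)
    (hm : m ≤ (Finset.univ.filter (fun i => p i ≤ α * (m : ℕ) / T)).card) :
    m ≤ bhNumReject p α := by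
  rcases m with _ | n
  · exact Nat.zero_le _
  have hn : n < T := by
    have h2 := hm.trans (Finset.card_le_univ _)
    rw [Fintype.card_fin] at h2
    exact h2
  have hmem : (⟨n, hn⟩ : Fin T) ∈ Finset.univ.filter
      (fun m : Fin T => p (Tuple.sort p m) ≤ α * (m.val + 1) / T) := by
    rw [Finset.mem_filter, bh_order_stat_le_iff]
    push_cast at hm
    exact ⟨Finset.mem_univ _, hm⟩
  unfold bhNumReject
  rw [dif_pos ⟨_, hmem⟩]
  exact Nat.succ_le_succ (Fin.le_def.1 (Finset.le_max' _ _ hmem))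

/-- Leave-one-out invariance of the Benjamini–Hochberg procedure: if index `t` is rejected by
BH at level `α` applied to `p`, then replacing `p_t` by `0` does not change the number of
rejections. -/
theorem bhReject_card_update_zero
    (T : ℕ) (hT : 1 ≤ T) (p : Fin T → ℝ) (hrange : ∀ t, p t ∈ Set.Icc (0 : ℝ) 1)
    (α : ℝ) (hα : α ∈ Set.Ioo (0 : ℝ) 1) (t : Fin T) (ht : t ∈ bhReject p α) :
    (bhReject (Function.update p t 0) α).card = (bhReject p α).card := by
  have hpt : p t ≤ α * (bhNumReject p α : ℕ) / T := by
    unfold bhReject at ht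
    split_ifs at ht with h0
    · simp at ht
    · exact (Finset.mem_filter.1 ht).2
  have hα0 : 0 ≤ α := hα.1.le
  have key : ∀ m : ℕ, bhNumReject p α ≤ m →
      Finset.univ.filter (fun i => Function.update p t 0 i ≤ α * (m : ℕ) / T)
        = Finset.univ.filter (fun i => p i ≤ α * (m : ℕ) / T) := by
    intro m hm
    have h1 : p t ≤ α * (m : ℕ) / T := hpt.trans (by gcongr)
    have h2 : 0 ≤ α * (m : ℕ) / T := by positivity
    ext i
    simp only [Finset.mem_filter, Finset.mem_univ, true_and]
    by_cases hi : i = t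
    · subst hi
      simp [h1, h2]
    · rw [Function.update_of_ne hi]
  have hle : bhNumReject p α ≤ bhNumReject (Function.update p t 0) α := by
    apply le_bhNumReject
    rw [key _ le_rfl]
    exact bhNumReject_le_card p α
  have hge : bhNumReject (Function.update p t 0) α ≤ bhNumReject p α := by
    apply le_bhNumReject
    rw [← key _ hle]
    exact bhNumReject_le_card _ α
  have heq := le_antisymm hge hle
  unfold bhReject
  rw [heq, key _ le_rfl]
end
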